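/- Let alpha, beta, nu, d, c1, c4, c6, xi0 > 0 satisfy alpha*d > 2*beta*nu, set delta = (alpha*d - 2*beta*nu)/(2*(nu + d)), let T >= 2 be an integer, and let 0 < epsilon < 1 with epsilon <= 2*c1*xi0^alpha*T^{-alpha}. Set L = ceil( log(2*c1*xi0^alpha*epsilon^{-1}) / (alpha*log T) ) and n_l = ceil( (2*epsilon^{-1}*c6*xi0^{delta}*(1 - T^{-delta})^{-1})^{d/nu} * xi_l^{(alpha + 2*beta)*d/(2*(nu + d))} ) for l = 1, ..., L. Then c4 * sum_{l=1}^{L} n_l * xi_l^{-beta} <= c5 * epsilon^{-d/nu}, where c5 = c4*c8*xi0^{delta}*(1 - T^{-delta})^{-1} + c4*2^{beta/alpha}*c1^{beta/alpha}*T^{beta}*(1 - T^{-beta})^{-1} and c8 = (2*c6*xi0^{delta}*(1 - T^{-delta})^{-1})^{d/nu}. -/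

import Mathlib

/-!
Rounding up costs at most one extra sample per level, and the exponents are such that
`ξ_l ^ ((α + 2β)d / (2(ν + d))) * ξ_l ^ (-β) = ξ_l ^ δ` with `δ > 0`. The total cost is thus at most
`A ∑ ξ_l ^ δ + ∑ ξ_l ^ (-β)` up to the factor `c4`, where `A` is proportional to `ε ^ (-d/ν)`. The
first sum is a convergent geometric series. The second one grows geometrically, so it is comparable
to its last term, and the choice of `L` makes `ξ_L ^ (-β)` at most of order `ε ^ (-β/α)`, hence of
order `ε ^ (-d/ν)` because `β/α < d/(2ν)`.
-/

open Finset Real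

theorem sum_rpow_neg_mul_le {ι : Type*} {s : Finset ι} {f : ι → ℤ} (hinj : Set.InjOn f s)
    (hnonneg : ∀ i ∈ s, 0 ≤ f i) {t p : ℝ} (ht : 1 < t) (hp : 0 < p) :
    ∑ i ∈ s, t ^ (-(f i * p)) ≤ (1 - t ^ (-p))⁻¹ := by
  have ht0 : 0 < t := one_pos.trans ht
  have hr0 : 0 ≤ t ^ (-p) := rpow_nonneg ht0.le _
  have hr1 : t ^ (-p) < 1 := rpow_lt_one_of_one_lt_of_neg ht (neg_neg_of_pos hp)
  have hinj' : Set.InjOn (fun i ↦ (f i).toNat) s := fun i hi j hj hij ↦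
    hinj hi hj (by have := hnonneg i hi; have := hnonneg j hj; lia)
  have hterm : ∀ i ∈ s, t ^ (-(f i * p)) = (t ^ (-p)) ^ (f i).toNat := fun i hi ↦ by
    have hcast : (((f i).toNat : ℕ) : ℝ) = f i := by
      exact_mod_cast Int.toNat_of_nonneg (hnonneg i hi)
    rw [← rpow_natCast, hcast, ← rpow_mul ht0.le, neg_mul, mul_comm p]
  calc ∑ i ∈ s, t ^ (-(f i * p))
      = ∑ k ∈ s.image fun i ↦ (f i).toNat, (t ^ (-p)) ^ k := by
        rw [sum_image hinj', sum_congr rfl hterm]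
    _ ≤ (1 - t ^ (-p))⁻¹ :=
        sum_le_hasSum _ (fun k _ ↦ pow_nonneg hr0 k) (hasSum_geometric_of_lt_one hr0 hr1)

theorem inv_one_sub_rpow_neg_pos {t p : ℝ} (ht : 1 < t) (hp : 0 < p) : 0 < (1 - t ^ (-p))⁻¹ :=
  inv_pos.2 (sub_pos.2 (rpow_lt_one_of_one_lt_of_neg ht (neg_neg_of_pos hp)))

theorem mul_inv_rpow_eq_mul_rpow_neg {a x : ℝ} (ha : 0 ≤ a) (hx : 0 ≤ x) (p : ℝ) :
    (a * x⁻¹) ^ p = a ^ p * x ^ (-p) := by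
  rw [mul_rpow ha (inv_nonneg.2 hx), inv_rpow hx, rpow_neg hx]

theorem rpow_ceil_logb_le {t y : ℝ} (ht : 1 < t) (hy : 0 < y) :
    t ^ (⌈logb t y⌉ : ℝ) ≤ t * y := by
  have ht0 : 0 < t := one_pos.trans ht
  calc t ^ (⌈logb t y⌉ : ℝ)
      ≤ t ^ (1 + logb t y) :=
        rpow_le_rpow_of_exponent_le ht.le ((Int.ceil_lt_add_one _).le.trans_eq (add_comm _ _))
    _ = t * y := by rw [rpow_add ht0, rpow_one, rpow_logb ht0 ht.ne' hy]

/-- The fidelity parameter `ξ_l = ξ₀ T⁻ˡ`; the base `T` is allowed to be any real number. -/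
noncomputable def fidelity (xi0 T : ℝ) (l : ℤ) : ℝ :=
  xi0 * T ^ (-(l : ℝ))

/-- The number `L` of fidelity levels, chosen so that the bias at the finest level is at most
`ε / 2`. It is an integer rather than a natural number, and is nonpositive when `ε` is large. -/
noncomputable def numLevels (alpha c1 xi0 T eps : ℝ) : ℤ :=
  ⌈log (2 * c1 * xi0 ^ alpha * eps⁻¹) / (alpha * log T)⌉

section fidelity

variable {xi0 T : ℝ}

theorem fidelity_pos (hxi0 : 0 < xi0) (hT : 0 < T) (l : ℤ) : 0 < fidelity xi0 T l :=
  mul_pos hxi0 (rpow_pos_of_pos hT _)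

theorem fidelity_rpow (hxi0 : 0 ≤ xi0) (hT : 0 ≤ T) (l : ℤ) (p : ℝ) :
    fidelity xi0 T l ^ p = xi0 ^ p * T ^ (-(l * p)) := by
  rw [fidelity, mul_rpow hxi0 (rpow_nonneg hT _), ← rpow_mul hT, neg_mul]

theorem sum_fidelity_rpow_le (hxi0 : 0 ≤ xi0) (hT : 1 < T) {p : ℝ} (hp : 0 < p) (L : ℤ) :
    ∑ l ∈ Icc 1 L, fidelity xi0 T l ^ p ≤ xi0 ^ p * (1 - T ^ (-p))⁻¹ := by
  have hT0 : 0 ≤ T := (one_pos.trans hT).le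
  simp only [fidelity_rpow hxi0 hT0, ← mul_sum]
  refine mul_le_mul_of_nonneg_left ?_ (rpow_nonneg hxi0 p)
  exact sum_rpow_neg_mul_le (f := id) (Set.injOn_id _)
    (fun l hl ↦ zero_le_one.trans (mem_Icc.1 hl).1) hT hp

theorem sum_fidelity_rpow_neg_le (hxi0 : 0 ≤ xi0) (hT : 1 < T) {p : ℝ} (hp : 0 < p) (L : ℤ) :
    ∑ l ∈ Icc 1 L, fidelity xi0 T l ^ (-p) ≤ fidelity xi0 T L ^ (-p) * (1 - T ^ (-p))⁻¹ := by
  have hT0 : 0 < T := one_pos.trans hT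
  have hterm (l : ℤ) : fidelity xi0 T l ^ (-p) =
      fidelity xi0 T L ^ (-p) * T ^ (-(((L - l : ℤ) : ℝ) * p)) := by
    rw [fidelity_rpow hxi0 hT0.le, fidelity_rpow hxi0 hT0.le, mul_assoc, ← rpow_add hT0]
    push_cast
    ring_nf
  rw [sum_congr rfl fun l _ ↦ hterm l, ← mul_sum]
  refine mul_le_mul_of_nonneg_left ?_ (by rw [fidelity]; positivity)
  exact sum_rpow_neg_mul_le (sub_right_injective.injOn)
    (fun l hl ↦ sub_nonneg.2 (mem_Icc.1 hl).2) hT hp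

theorem sum_ceil_mul_fidelity_rpow_neg_le (hxi0 : 0 < xi0) (hT : 1 < T) {A beta delta : ℝ}
    (hA : 0 ≤ A) (hb : 0 < beta) (hdelta : 0 < delta) (L : ℤ) :
    ∑ l ∈ Icc 1 L, (⌈A * fidelity xi0 T l ^ (delta + beta)⌉ : ℝ) * fidelity xi0 T l ^ (-beta) ≤
      A * (xi0 ^ delta * (1 - T ^ (-delta))⁻¹) +
        fidelity xi0 T L ^ (-beta) * (1 - T ^ (-beta))⁻¹ := by
  have hterm (l : ℤ) :
      (⌈A * fidelity xi0 T l ^ (delta + beta)⌉ : ℝ) * fidelity xi0 T l ^ (-beta) ≤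
        A * fidelity xi0 T l ^ delta + fidelity xi0 T l ^ (-beta) := by
    have hpos := fidelity_pos hxi0 (one_pos.trans hT) l
    calc (⌈A * fidelity xi0 T l ^ (delta + beta)⌉ : ℝ) * fidelity xi0 T l ^ (-beta)
        ≤ (A * fidelity xi0 T l ^ (delta + beta) + 1) * fidelity xi0 T l ^ (-beta) :=
          mul_le_mul_of_nonneg_right (Int.ceil_lt_add_one _).le (rpow_nonneg hpos.le _)
      _ = A * fidelity xi0 T l ^ delta + fidelity xi0 T l ^ (-beta) := by
          rw [add_mul, one_mul, mul_assoc, ← rpow_add hpos, add_neg_cancel_right]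
  calc ∑ l ∈ Icc 1 L, (⌈A * fidelity xi0 T l ^ (delta + beta)⌉ : ℝ) * fidelity xi0 T l ^ (-beta)
      ≤ ∑ l ∈ Icc 1 L, (A * fidelity xi0 T l ^ delta + fidelity xi0 T l ^ (-beta)) :=
        sum_le_sum fun l _ ↦ hterm l
    _ = A * ∑ l ∈ Icc 1 L, fidelity xi0 T l ^ delta +
          ∑ l ∈ Icc 1 L, fidelity xi0 T l ^ (-beta) := by rw [sum_add_distrib, mul_sum]
    _ ≤ _ := add_le_add
        (mul_le_mul_of_nonneg_left (sum_fidelity_rpow_le hxi0.le hT hdelta L) hA)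
        (sum_fidelity_rpow_neg_le hxi0.le hT hb L)

theorem numLevels_eq_ceil_logb {alpha c1 eps : ℝ} (hc1 : 0 < c1) (hxi0 : 0 < xi0)
    (heps : 0 < eps) (ha : alpha ≠ 0) :
    numLevels alpha c1 xi0 T eps = ⌈logb T (xi0 * (2 * c1 * eps⁻¹) ^ alpha⁻¹)⌉ := by
  have hroot : xi0 * (2 * c1 * eps⁻¹) ^ alpha⁻¹ =
      (2 * c1 * xi0 ^ alpha * eps⁻¹) ^ alpha⁻¹ := by
    rw [mul_right_comm _ (xi0 ^ alpha), mul_rpow (by positivity) (rpow_nonneg hxi0.le _),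
      rpow_rpow_inv hxi0.le ha, mul_comm]
  rw [numLevels, hroot, logb, log_rpow (by positivity), div_mul_eq_div_div, inv_mul_eq_div]

theorem fidelity_numLevels_rpow_neg_le {alpha beta c1 eps : ℝ} (ha : alpha ≠ 0) (hb : 0 ≤ beta)
    (hc1 : 0 < c1) (hxi0 : 0 < xi0) (hT : 1 < T) (heps : 0 < eps) :
    fidelity xi0 T (numLevels alpha c1 xi0 T eps) ^ (-beta) ≤
      T ^ beta * (2 * c1 * eps⁻¹) ^ (beta / alpha) := by
  have hT0 : 0 < T := one_pos.trans hT
  set L := numLevels alpha c1 xi0 T eps with hL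
  have hTL : T ^ (L : ℝ) ≤ T * (xi0 * (2 * c1 * eps⁻¹) ^ alpha⁻¹) := by
    rw [hL, numLevels_eq_ceil_logb hc1 hxi0 heps ha]
    exact rpow_ceil_logb_le hT (by positivity)
  calc fidelity xi0 T L ^ (-beta)
      = xi0 ^ (-beta) * (T ^ (L : ℝ)) ^ beta := by
        rw [fidelity_rpow hxi0.le hT0.le, mul_neg, neg_neg, rpow_mul hT0.le]
    _ ≤ xi0 ^ (-beta) * (T * (xi0 * (2 * c1 * eps⁻¹) ^ alpha⁻¹)) ^ beta := by gcongr
    _ = xi0 ^ (-beta) * xi0 ^ beta * (T ^ beta * (2 * c1 * eps⁻¹) ^ (beta / alpha)) := by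
        rw [mul_rpow hT0.le (by positivity), mul_rpow hxi0.le (by positivity),
          ← rpow_mul (by positivity), inv_mul_eq_div]
        ring
    _ = T ^ beta * (2 * c1 * eps⁻¹) ^ (beta / alpha) := by
        rw [← rpow_add hxi0, neg_add_cancel, rpow_zero, one_mul]

theorem fidelity_numLevels_rpow_neg_le_rpow_neg {alpha beta c1 eps p : ℝ} (ha : alpha ≠ 0)
    (hb : 0 ≤ beta) (hc1 : 0 < c1) (hxi0 : 0 < xi0) (hT : 1 < T) (heps0 : 0 < eps)
    (heps1 : eps ≤ 1) (hp : beta / alpha ≤ p) :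
    fidelity xi0 T (numLevels alpha c1 xi0 T eps) ^ (-beta) ≤
      T ^ beta * ((2 * c1) ^ (beta / alpha) * eps ^ (-p)) := by
  refine (fidelity_numLevels_rpow_neg_le ha hb hc1 hxi0 hT heps0).trans ?_
  rw [mul_inv_rpow_eq_mul_rpow_neg (by positivity) heps0.le]
  gcongr ?_ * (?_ * ?_)
  exact rpow_le_rpow_of_exponent_ge heps0 heps1 (neg_le_neg hp)

end fidelity

theorem stmt9_general (alpha beta nu d c1 c4 c6 xi0 eps T : ℝ)
    (hb : 0 < beta) (hnu : 0 < nu) (hd : 0 < d)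
    (hc1 : 0 < c1) (hc4 : 0 < c4) (hc6 : 0 < c6) (hxi0 : 0 < xi0)
    (hgt : alpha * d > 2 * beta * nu) (hT : 1 < T) (heps0 : 0 < eps) (heps1 : eps ≤ 1)
    (delta : ℝ) (hdelta : delta = (alpha * d - 2 * beta * nu) / (2 * (nu + d)))
    (L : ℤ) (hL : L = numLevels alpha c1 xi0 T eps) (n : ℤ → ℤ)
    (hn : ∀ l ∈ Icc 1 L,
      n l = ⌈(2 * eps⁻¹ * c6 * xi0 ^ delta * (1 - T ^ (-delta))⁻¹) ^ (d / nu) *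
        fidelity xi0 T l ^ ((alpha + 2 * beta) * d / (2 * (nu + d)))⌉)
    (c5 c8 : ℝ) (hc8 : c8 = (2 * c6 * xi0 ^ delta * (1 - T ^ (-delta))⁻¹) ^ (d / nu))
    (hc5 : c5 = c4 * c8 * xi0 ^ delta * (1 - T ^ (-delta))⁻¹ +
      c4 * 2 ^ (beta / alpha) * c1 ^ (beta / alpha) * T ^ beta * (1 - T ^ (-beta))⁻¹) :
    c4 * ∑ l ∈ Icc 1 L, (n l : ℝ) * fidelity xi0 T l ^ (-beta) ≤ c5 * eps ^ (-(d / nu)) := by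
  have hbnu : 0 < beta * nu := mul_pos hb hnu
  have ha : 0 < alpha := pos_of_mul_pos_left (by linarith : 0 < alpha * d) hd.le
  have hdelta_pos : 0 < delta := hdelta ▸ div_pos (by linarith) (by linarith)
  have hratio_delta := inv_one_sub_rpow_neg_pos hT hdelta_pos
  have hratio_beta := inv_one_sub_rpow_neg_pos hT hb
  have hexp : (alpha + 2 * beta) * d / (2 * (nu + d)) = delta + beta := by
    rw [hdelta]; field_simp; ring
  have hA : (2 * eps⁻¹ * c6 * xi0 ^ delta * (1 - T ^ (-delta))⁻¹) ^ (d / nu) =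
      c8 * eps ^ (-(d / nu)) := by
    rw [hc8, ← mul_inv_rpow_eq_mul_rpow_neg (by positivity) heps0.le]; ring_nf
  have hfinest : fidelity xi0 T L ^ (-beta) ≤
      T ^ beta * ((2 * c1) ^ (beta / alpha) * eps ^ (-(d / nu))) :=
    hL ▸ fidelity_numLevels_rpow_neg_le_rpow_neg ha.ne' hb.le hc1 hxi0 hT heps0 heps1
      ((div_le_div_iff₀ ha hnu).2 (by linarith))
  rw [sum_congr rfl fun l hl ↦ by rw [hn l hl, hA, hexp]]
  calc _ ≤ c4 * (c8 * eps ^ (-(d / nu)) * (xi0 ^ delta * (1 - T ^ (-delta))⁻¹) +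
        fidelity xi0 T L ^ (-beta) * (1 - T ^ (-beta))⁻¹) := by
        gcongr
        exact sum_ceil_mul_fidelity_rpow_neg_le hxi0 hT (hA ▸ by positivity) hb hdelta_pos L
    _ ≤ c4 * (c8 * eps ^ (-(d / nu)) * (xi0 ^ delta * (1 - T ^ (-delta))⁻¹) +
        T ^ beta * ((2 * c1) ^ (beta / alpha) * eps ^ (-(d / nu))) *
          (1 - T ^ (-beta))⁻¹) := by gcongr
    _ = c5 * eps ^ (-(d / nu)) := by
        rw [hc5, mul_rpow zero_le_two hc1.le]; ring

/-- Total cost bound in the case `αd > 2βν` of the cost complexity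
theorem: `c4 ∑_{l=1}^L n_l ξ_l^{-β} ≤ c5 ε^{-d/ν}`. -/
theorem stmt9 (alpha beta nu d c1 c4 c6 xi0 eps : ℝ) (T : ℤ)
    (ha : 0 < alpha) (hb : 0 < beta) (hnu : 0 < nu) (hd : 0 < d)
    (hc1 : 0 < c1) (hc4 : 0 < c4) (hc6 : 0 < c6) (hxi0 : 0 < xi0)
    (hgt : alpha * d > 2 * beta * nu) (hT : 2 ≤ T)
    (heps0 : 0 < eps) (heps1 : eps < 1)
    (heps2 : eps ≤ 2 * c1 * xi0 ^ alpha * (T : ℝ) ^ (-alpha))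
    (delta : ℝ) (hdelta : delta = (alpha * d - 2 * beta * nu) / (2 * (nu + d)))
    (L : ℤ)
    (hL : L = ⌈Real.log (2 * c1 * xi0 ^ alpha * eps⁻¹) / (alpha * Real.log (T : ℝ))⌉)
    (n : ℤ → ℤ)
    (hn : ∀ l ∈ Finset.Icc (1 : ℤ) L,
      n l = ⌈(2 * eps⁻¹ * c6 * xi0 ^ delta * (1 - (T : ℝ) ^ (-delta))⁻¹) ^ (d / nu) *
        (xi0 * (T : ℝ) ^ (-(l : ℝ))) ^ ((alpha + 2 * beta) * d / (2 * (nu + d)))⌉)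
    (c5 c8 : ℝ)
    (hc8 : c8 = (2 * c6 * xi0 ^ delta * (1 - (T : ℝ) ^ (-delta))⁻¹) ^ (d / nu))
    (hc5 : c5 = c4 * c8 * xi0 ^ delta * (1 - (T : ℝ) ^ (-delta))⁻¹ +
      c4 * (2 : ℝ) ^ (beta / alpha) * c1 ^ (beta / alpha) * (T : ℝ) ^ beta *
        (1 - (T : ℝ) ^ (-beta))⁻¹) :
    c4 * ∑ l ∈ Finset.Icc (1 : ℤ) L, (n l : ℝ) * (xi0 * (T : ℝ) ^ (-(l : ℝ))) ^ (-beta)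
      ≤ c5 * eps ^ (-(d / nu)) := by
  exact stmt9_general alpha beta nu d c1 c4 c6 xi0 eps T hb hnu hd hc1 hc4 hc6 hxi0 hgt
    (by exact_mod_cast hT) heps0 heps1.le delta hdelta L hL n hn c5 c8 hc8 hc5
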